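/- Let F be a field of characteristic p > 0. Suppose that for all α ∈ F and all γ, δ ∈ F^×, the pure part of the Albert p-form A(α,α,γ,δ), i.e. the map F ⊕ F_α ⊕ F_α → F, (x, y, z) ↦ x^p + γ·N_{F_α/F}(y) + δ·N_{F_α/F}(z), has a non-trivial zero. Then H³(F) = 0. -/

import Mathlib

/-!
It suffices to show that every `α·dlog γ ∧ dlog δ` is zero in `H³(F)`, since these forms generate
`Ω^2(F)` additively (`hRel_eq_top`).  If `α ∈ ℘(F)` this holds by definition.  Otherwise `F_α` is a
field `K = F(θ)`, Galois over `F`, with `θ^p − θ = α`.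

The main point is that `α·dlog N(y)` is zero in `H²(F)` for `y ∈ K^×` (`smul_dlog_norm_mem`).
Write `y = ∑ bᵢ` with `bᵢ = aᵢ θ^(ip)` and `aᵢ ∈ F`; as `d(θ^p) = 0`, `dbᵢ = bᵢ·dlog aᵢ`.  Then
`θ·dlog y = ∑ cᵢ·dlog aᵢ` with `cᵢ = θ bᵢ / y`, and `θ^p·dlog y = ∑ cᵢ^p·dlog aᵢ + dk` for some
`k ∈ K`, because `b ↦ b^(p-1)·db` is additive modulo exact forms (`pow_mul_D_sum`).  Subtracting and
summing over the conjugates gives `α·dlog N(y) = ∑ ℘(tr cᵢ)·dlog aᵢ + d(tr k)` in `Ω^1(K)`, hence in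
`Ω^1(F)`, which embeds into it (`kaehler_map_injective`).

Hence `γ` and `δ` may be multiplied by norms from `K` without changing the class of
`α·dlog γ ∧ dlog δ`.  A nontrivial zero `(x, y, z)` of the pure part with `y, z ≠ 0` reduces this to
`u = γ·N(y)`, `v = δ·N(z)` with `u + v = -x^p`, where `du = -dv` and so `du ∧ dv = 0`.  If `y` or `z`
is zero, then `δ` or `γ` is a norm times `-x^p`, whose differential is zero (`symbol_mem`).
-/

/-!
STATEMENT 5 (Theorem `pure`):
Let `F` be a field of characteristic `p > 0`.  Suppose that for all `α ∈ F` and all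
`γ, δ ∈ F^×`, the pure part of the Albert `p`-form `A(α,α,γ,δ)`, i.e. the map
`F ⊕ F_α ⊕ F_α → F`, `(x,y,z) ↦ x^p + γ·N_{F_α/F}(y) + δ·N_{F_α/F}(z)`,
has a non-trivial zero.  Then `H³(F) = 0`.

For `a ∈ F`, `F_a = F[T]/(T^p − T − a)` is a degree-`p` étale `F`-algebra with norm map
`N_{F_a/F}` (the determinant of multiplication, Mathlib's `Algebra.norm`).

`H³(F)` is the cokernel of the Artin–Schreier map `℘ : Ω^2(F) → Ω^2(F)/dΩ^1(F)`,
where `Ω^n(F) = ⋀^n Ω^1(F)` for the absolute Kähler differentials `Ω^1(F)`.  Since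
`Ω^2(F)` is generated as an additive group by logarithmic differentials, `H³(F)` is the
quotient of `Ω^2(F)` by the subgroup generated by `dΩ^1(F)` (itself generated by the
`dc₁∧dc₂`) together with all `(c^p−c)·(da₁/a₁)∧(da₂/a₂)`.
-/

noncomputable section

open Polynomial

/-- The absolute differential `d : F → Ω^1(F)`. -/
def absD (F : Type*) [Field F] : F → KaehlerDifferential ℤ F :=
  fun a => KaehlerDifferential.D ℤ F a

/-- The wedge `ω₁ ∧ … ∧ ωₙ` of `n` differential 1-forms, as an element of
`Ω^n(F) = ⋀[F]^n Ω^1(F)`. -/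
def wedge (F : Type*) [Field F] (n : ℕ) (v : Fin n → KaehlerDifferential ℤ F) :
    ⋀[F]^n (KaehlerDifferential ℤ F) :=
  ⟨ExteriorAlgebra.ιMulti F n v, ExteriorAlgebra.ιMulti_range F n (Set.mem_range_self v)⟩

/-- The logarithmic differential form `b·(da₁/a₁) ∧ … ∧ (daₙ/aₙ) ∈ Ω^n(F)`. -/
def logForm (F : Type*) [Field F] (n : ℕ) (b : F) (a : Fin n → F) :
    ⋀[F]^n (KaehlerDifferential ℤ F) :=
  b • wedge F n (fun j => (a j)⁻¹ • absD F (a j))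

/-- The subgroup `dΩ^{n-1}(F)` of `Ω^n(F)`: the image of `d : Ω^{n-1}(F) → Ω^n(F)`,
i.e. the additive subgroup generated by all `dc₁ ∧ … ∧ dcₙ`. -/
def dOmega (F : Type*) [Field F] (n : ℕ) :
    AddSubgroup (⋀[F]^n (KaehlerDifferential ℤ F)) :=
  AddSubgroup.closure {ω | ∃ c : Fin n → F, ω = wedge F n (fun j => absD F (c j))}

/-- The subgroup of `Ω^n(F)` whose quotient defines `H^{n+1}(F)`: it is generated by
`dΩ^{n-1}(F)` together with the image of the Artin–Schreier map, i.e. all elements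
`(c^p − c)·(da₁/a₁)∧…∧(daₙ/aₙ)` with `c ∈ F`, `a₁,…,aₙ ∈ F^×`. -/
def hRel (F : Type*) [Field F] (p n : ℕ) :
    AddSubgroup (⋀[F]^n (KaehlerDifferential ℤ F)) :=
  dOmega F n ⊔ AddSubgroup.closure
    {ω | ∃ (c : F) (a : Fin n → F), (∀ j, a j ≠ 0) ∧ ω = logForm F n (c ^ p - c) a}

/-- `H^{n+1}(F)`, the cokernel of the Artin–Schreier map
`℘ : Ω^n(F) → Ω^n(F)/dΩ^{n-1}(F)`. -/
def Hgroup (F : Type*) [Field F] (p n : ℕ) :=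
  (⋀[F]^n (KaehlerDifferential ℤ F)) ⧸ hRel F p n

/-! ### Additivity of the inverse Cartier operator modulo exact forms -/

/-- The derivative is that of `P = ((X + 1)^p − X^p − 1)/p`, which has integer coefficients. -/
theorem exists_derivative_eq (p : ℕ) (hp : p.Prime) :
    ∃ P : ℤ[X], derivative P = (X + 1) ^ (p - 1) - X ^ (p - 1) := by
  obtain ⟨r, hr⟩ := exists_add_pow_prime_eq hp (X : ℤ[X]) 1
  refine ⟨X * 1 * r, ?_⟩
  have h := congrArg derivative hr
  simp only [derivative_pow, derivative_add, derivative_X, derivative_one, derivative_mul,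
    derivative_natCast, one_pow] at h
  have hp0 : ((p : ℕ) : ℤ[X]) ≠ 0 := by exact_mod_cast hp.ne_zero
  apply mul_left_cancel₀ hp0
  simp only [derivative_mul, derivative_X, derivative_one]
  simp only [map_natCast] at h
  linear_combination -h

theorem D_pow_char {K : Type*} [Field K] (p : ℕ) [CharP K p] (x : K) :
    absD K (x ^ p) = 0 := by
  rw [absD, Derivation.leibniz_pow, ← Nat.cast_smul_eq_nsmul K, CharP.cast_eq_zero, zero_smul]

theorem D_pow_char_mul {K : Type*} [Field K] (p : ℕ) [CharP K p] (x y : K) :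
    absD K (x ^ p * y) = x ^ p • absD K y := by
  have := D_pow_char p x
  simp only [absD] at *
  rw [Derivation.leibniz, this, smul_zero, add_zero]

theorem D_add {K : Type*} [Field K] (x y : K) :
    absD K (x + y) = absD K x + absD K y := map_add _ x y

theorem D_zero {K : Type*} [Field K] : absD K 0 = 0 := map_zero _

theorem D_mul {K : Type*} [Field K] (x y : K) :
    absD K (x * y) = x • absD K y + y • absD K x := Derivation.leibniz _ x y

theorem D_sum {K ι : Type*} [Field K] (s : Finset ι) (f : ι → K) :
    absD K (∑ i ∈ s, f i) = ∑ i ∈ s, absD K (f i) := map_sum (KaehlerDifferential.D ℤ K) f s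

/-- With `P = ((X + 1)^p − X^p − 1)/p`, the failure of additivity of `b ↦ b^(p-1)·db` on the pair
`(t b, b)` is the exact form `d(b^p P(t))`. -/
theorem pow_mul_D_add_aux {K : Type*} [Field K] (p : ℕ) [Fact p.Prime] [CharP K p] {P : ℤ[X]}
    (hP : derivative P = (X + 1) ^ (p - 1) - X ^ (p - 1)) (t b : K) :
    (t * b + b) ^ (p - 1) • absD K (t * b + b) =
      (t * b) ^ (p - 1) • absD K (t * b) + b ^ (p - 1) • absD K b
        + absD K (b ^ p * aeval t P) := by
  obtain ⟨q, hq⟩ : ∃ q, p = q + 1 := ⟨p - 1, by have := (Fact.out : p.Prime).pos; omega⟩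
  have h1 : absD K (aeval t P) = ((t + 1) ^ (p - 1) - t ^ (p - 1)) • absD K t := by
    rw [absD, Derivation.map_aeval, hP]
    simp [absD]
  have h2 : (t + 1) ^ p = t ^ p + 1 := by rw [add_pow_char, one_pow]
  rw [D_pow_char_mul, h1, D_add, D_mul]
  have hq1 : p - 1 = q := by omega
  rw [hq1]
  rw [hq] at h2 ⊢
  have h3 : t * b + b = b * (t + 1) := by ring
  rw [h3, mul_pow, mul_pow]
  match_scalars
  · linear_combination b ^ q * h2
  · ring

/-- The map `b ↦ b^(p-1)·db` is additive modulo exact forms.  The primitive `k` is the same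
expression for all conjugates, so the exact terms of the conjugates add up to `d` of a trace. -/
theorem pow_mul_D_add {K : Type*} [Field K] (p : ℕ) [Fact p.Prime] [CharP K p] (a b : K) :
    ∃ k : K, ∀ σ : K →+* K, (σ (a + b)) ^ (p - 1) • absD K (σ (a + b)) =
      (σ a) ^ (p - 1) • absD K (σ a) + (σ b) ^ (p - 1) • absD K (σ b) + absD K (σ k) := by
  obtain ⟨P, hP⟩ := exists_derivative_eq p Fact.out
  by_cases hb : b = 0
  · exact ⟨0, fun σ => by simp [hb, D_zero]⟩
  refine ⟨b ^ p * aeval (a / b) P, fun σ => ?_⟩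
  have h1 : σ (aeval (a / b) P) = aeval (σ (a / b)) P :=
    (aeval_algHom_apply (σ.toIntAlgHom) (a / b) P).symm
  have h2 : σ a = σ (a / b) * σ b := by rw [← map_mul, div_mul_cancel₀ _ hb]
  rw [map_mul, map_pow, h1, map_add, h2]
  exact pow_mul_D_add_aux p hP _ _

theorem pow_mul_D_sum {K ι : Type*} [Field K] (p : ℕ) [Fact p.Prime] [CharP K p]
    (s : Finset ι) (b : ι → K) :
    ∃ k : K, ∀ σ : K →+* K, (σ (∑ i ∈ s, b i)) ^ (p - 1) • absD K (σ (∑ i ∈ s, b i)) =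
      ∑ i ∈ s, (σ (b i)) ^ (p - 1) • absD K (σ (b i)) + absD K (σ k) := by
  classical
  induction s using Finset.induction_on with
  | empty => exact ⟨0, fun σ => by simp [D_zero]⟩
  | insert j s hj ih =>
    obtain ⟨k, hk⟩ := ih
    obtain ⟨l, hl⟩ := pow_mul_D_add p (b j) (∑ i ∈ s, b i)
    refine ⟨k + l, fun σ => ?_⟩
    rw [Finset.sum_insert hj, hl, hk, Finset.sum_insert hj, map_add σ k l, D_add]
    abel

/-! ### Artin–Schreier polynomials -/

/-- Every root `r` of `X^p − X − α` has `℘(r) = α`.  A monic factor of degree `0 < m < p` has its sum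
of roots `s` in `F`, and `℘(s) = m·α`, so `c = s/m` satisfies `℘(c) = α`. -/
theorem irreducible_of_forall_ne {F : Type*} [Field F] (p : ℕ) [hp : Fact p.Prime] [CharP F p]
    (α : F) (hα : ∀ c : F, c ^ p - c ≠ α) : Irreducible (X ^ p - X - C α : F[X]) := by
  have hX : (X ^ p - X - C α : F[X]) = X ^ p - (X + C α) := by ring
  have hdeg : (X + C α : F[X]).natDegree < p := by
    rw [natDegree_X_add_C]; exact hp.out.one_lt
  have hmon : (X ^ p - X - C α : F[X]).Monic := by
    rw [hX]; exact monic_X_pow_sub (by rw [degree_X_add_C]; exact_mod_cast hp.out.one_lt)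
  have hnat : (X ^ p - X - C α : F[X]).natDegree = p := by
    rw [hX, natDegree_sub_eq_left_of_natDegree_lt] <;> simp only [natDegree_X_pow]
    exact hdeg
  rw [hmon.irreducible_iff_natDegree']
  refine ⟨fun h => by rw [h, natDegree_one] at hnat; exact hp.out.ne_zero hnat.symm, ?_⟩
  intro g h hg hh hgh hmem
  rw [hnat, Finset.mem_Ioc] at hmem
  set m := h.natDegree
  have hmp : m < p := lt_of_le_of_lt hmem.2 (Nat.div_lt_self hp.out.pos one_lt_two)
  have hm0 : (m : F) ≠ 0 := by
    rw [Ne, CharP.cast_eq_zero_iff F p]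
    exact fun hd => absurd (Nat.le_of_dvd hmem.1 hd) (by omega)
  let L := AlgebraicClosure F
  have : CharP L p := charP_of_injective_algebraMap (algebraMap F L).injective p
  have hspl : (h.map (algebraMap F L)).Splits := IsAlgClosed.splits _
  have hmonL : (h.map (algebraMap F L)).Monic := hh.map _
  have hcard : (h.map (algebraMap F L)).roots.card = m := by
    rw [← hspl.natDegree_eq_card_roots, natDegree_map]
  set s := (h.map (algebraMap F L)).roots
  have hsum : algebraMap F L (-h.nextCoeff) = s.sum := by
    have := hspl.nextCoeff_eq_neg_sum_roots_of_monic hmonL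
    rw [nextCoeff_map (algebraMap F L).injective] at this
    rw [map_neg, this, neg_neg]
  have hr : ∀ r ∈ s, r ^ p = r + algebraMap F L α := by
    intro r hr
    have h0 : aeval r h = 0 := by
      have := (mem_roots'.1 hr).2
      rwa [IsRoot.def, eval_map_algebraMap] at this
    have h1 : aeval r (X ^ p - X - C α : F[X]) = 0 := by rw [← hgh, map_mul, h0, mul_zero]
    simp only [map_sub, map_pow, aeval_X, aeval_C] at h1
    linear_combination h1
  have hsp : s.sum ^ p = s.sum + m * algebraMap F L α := by
    have h1 : (s.sum) ^ p = (s.map (fun r => r ^ p)).sum := by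
      exact map_multiset_sum (frobenius L p) s
    rw [h1, Multiset.map_congr rfl hr, Multiset.sum_map_add]
    simp [hcard]
  rw [← hsum] at hsp
  have hF : (-h.nextCoeff) ^ p = -h.nextCoeff + m * α := by
    apply (algebraMap F L).injective
    rw [map_pow, hsp]; simp
  have hmF : (m : F) ^ p = m := map_natCast (frobenius F p) m
  apply hα (-h.nextCoeff / m)
  rw [div_pow, hF, hmF]
  field_simp
  ring

/-- The roots of `X^p − X − α` are `θ + i`, for `i` in the prime field. -/
theorem isGalois_of_root {F K : Type*} [Field F] [Field K] [Algebra F K] (p : ℕ)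
    [hp : Fact p.Prime] [CharP F p] (α : F) (θ : K) (hθ : θ ^ p - θ = algebraMap F K α)
    (htop : Algebra.adjoin F {θ} = ⊤) : IsGalois F K := by
  have : CharP K p := charP_of_injective_algebraMap (algebraMap F K).injective p
  set f : F[X] := X ^ p - X - C α
  have hX : f = X ^ p - (X + C α) := by simp only [f]; ring
  have hdeg : (X + C α : F[X]).natDegree < p := by
    rw [natDegree_X_add_C]; exact hp.out.one_lt
  have hmon : f.Monic := by
    rw [hX]; exact monic_X_pow_sub (by rw [degree_X_add_C]; exact_mod_cast hp.out.one_lt)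
  have hnat : f.natDegree = p := by
    rw [hX, natDegree_sub_eq_left_of_natDegree_lt] <;> simp only [natDegree_X_pow]
    exact hdeg
  have hsep : f.Separable := by
    have : derivative f = -1 := by
      simp [f, derivative_X_pow, CharP.cast_eq_zero]
    rw [separable_def, this]
    exact isCoprime_one_right.neg_right
  have hroot : ∀ i : ZMod p, θ + ZMod.castHom dvd_rfl K i ∈ (f.map (algebraMap F K)).roots := by
    intro i
    rw [mem_roots (hmon.map _).ne_zero, IsRoot.def, eval_map_algebraMap]
    have hi : (ZMod.castHom dvd_rfl K i) ^ p = ZMod.castHom dvd_rfl K i := by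
      rw [← map_pow, ZMod.pow_card]
    simp only [f, map_sub, map_pow, aeval_X, aeval_C]
    rw [add_pow_char, hi]
    linear_combination hθ
  have hspl : (f.map (algebraMap F K)).Splits := by
    rw [splits_iff_card_roots, natDegree_map, hnat]
    apply le_antisymm
    · calc _ ≤ _ := card_roots' _
        _ = p := by rw [natDegree_map, hnat]
    · have hinj : Function.Injective (fun i : ZMod p => θ + ZMod.castHom dvd_rfl K i) :=
        fun i j h => (ZMod.castHom dvd_rfl K).injective (add_left_cancel h)
      classical
      calc p = (Finset.univ.image (fun i : ZMod p => θ + ZMod.castHom dvd_rfl K i)).card := by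
            rw [Finset.card_image_of_injective _ hinj, Finset.card_univ, ZMod.card]
        _ ≤ (f.map (algebraMap F K)).roots.toFinset.card := by
            apply Finset.card_le_card
            intro x hx
            obtain ⟨i, -, rfl⟩ := Finset.mem_image.1 hx
            exact Multiset.mem_toFinset.2 (hroot i)
        _ ≤ _ := Multiset.toFinset_card_le _
  have : f.IsSplittingField F K := ⟨hspl, by
    rw [eq_top_iff, ← htop]
    apply Algebra.adjoin_mono
    rw [Set.singleton_subset_iff, mem_rootSet]
    refine ⟨hmon.ne_zero, ?_⟩
    simp only [f, map_sub, map_pow, aeval_X, aeval_C, hθ, sub_self]⟩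
  exact IsGalois.of_separable_splitting_field hsep

/-! ### Norms from the Artin–Schreier extension -/

/-- The subgroup of `Ω^1(F)` generated by the exact forms `dt` and the forms `(c^p − c)·da/a`, so that
`H²(F) = Ω^1(F) / relOne F p`.  For `a = 0` the form `a⁻¹ • da` is zero, so it is not excluded. -/
def relOne (F : Type*) [Field F] (p : ℕ) : AddSubgroup (KaehlerDifferential ℤ F) :=
  AddSubgroup.closure
    {ω | (∃ t : F, ω = absD F t) ∨ ∃ c a : F, ω = (c ^ p - c) • a⁻¹ • absD F a}

theorem dlog_mul {K : Type*} [Field K] {x y : K} (hx : x ≠ 0) (hy : y ≠ 0) :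
    (x * y)⁻¹ • absD K (x * y) = x⁻¹ • absD K x + y⁻¹ • absD K y := by
  rw [D_mul]
  match_scalars <;> field_simp

theorem dlog_prod {K ι : Type*} [Field K] (s : Finset ι) (f : ι → K) (hf : ∀ i ∈ s, f i ≠ 0) :
    (∏ i ∈ s, f i)⁻¹ • absD K (∏ i ∈ s, f i) = ∑ i ∈ s, (f i)⁻¹ • absD K (f i) := by
  classical
  induction s using Finset.induction_on with
  | empty => simp [absD]
  | insert j s hj ih =>
    have h1 : ∀ i ∈ s, f i ≠ 0 := fun i hi => hf i (Finset.mem_insert_of_mem hi)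
    rw [Finset.prod_insert hj, Finset.sum_insert hj,
      dlog_mul (hf j (Finset.mem_insert_self _ _)) (Finset.prod_ne_zero_iff.2 h1), ih h1]

/-- A separable algebraic extension is formally étale, so `Ω^1(K) = K ⊗ Ω^1(F)`. -/
theorem kaehler_map_injective (F K : Type*) [Field F] [Field K] [Algebra F K]
    [Algebra.IsSeparable F K] :
    Function.Injective (KaehlerDifferential.map ℤ ℤ F K) := by
  have : Algebra.FormallyEtale F K := Algebra.FormallyEtale.of_isSeparable F K
  have h := (KaehlerDifferential.tensorKaehlerEquivOfFormallyEtale ℤ F K).injective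
  intro x y hxy
  have h1 : (1 : K) ⊗ₜ[F] x = (1 : K) ⊗ₜ[F] y := by
    apply h
    simpa using hxy
  exact Module.FaithfullyFlat.tensorProduct_mk_injective (A := F) (B := K) _ h1

/-- For `K = F(θ)` with `θ^p − θ = α`, the class of `α·dlog N(y)` in `H²(F)` vanishes.
The norm is a product of conjugates, so `α·dlog N(y)` is the trace of `(θ^p − θ)·dlog y`, and the
expansion of `y` in powers of `θ^p`, whose differential is zero, makes this trace explicit. -/
theorem smul_dlog_norm_mem {F K : Type*} [Field F] [Field K] [Algebra F K] (p : ℕ)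
    [hp : Fact p.Prime] [CharP F p] [FiniteDimensional F K]
    (α : F) (θ : K) (hθ : θ ^ p - θ = algebraMap F K α)
    (htop : Algebra.adjoin F {θ} = ⊤) (y : K) (hy : y ≠ 0) :
    α • (Algebra.norm F y)⁻¹ • absD F (Algebra.norm F y) ∈ relOne F p := by
  have : CharP K p := charP_of_injective_algebraMap (algebraMap F K).injective p
  have : IsGalois F K := isGalois_of_root p α θ hθ htop
  have htop' : Algebra.adjoin F {θ ^ p} = ⊤ := by
    rw [eq_top_iff, ← htop]
    apply Algebra.adjoin_le
    rw [Set.singleton_subset_iff]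
    have : θ = θ ^ p - algebraMap F K α := by rw [← hθ]; ring
    rw [this]
    refine sub_mem ?_ (Subalgebra.algebraMap_mem _ _)
    rw [← this]
    exact Algebra.self_mem_adjoin_singleton F (θ ^ p)
  -- `y` is a polynomial in `θ ^ p` with coefficients `aᵢ` in `F`; its terms are `b i`, and `dl i`
  -- is `dlog aᵢ` (zero if `aᵢ = 0`).
  obtain ⟨g, hg⟩ : ∃ g : F[X], aeval (θ ^ p) g = y := by
    have : y ∈ Algebra.adjoin F {θ ^ p} := by rw [htop']; trivial
    rwa [Algebra.adjoin_singleton_eq_range_aeval] at this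
  set s := Finset.range (g.natDegree + 1)
  let φ := algebraMap F K
  let b : ℕ → K := fun i => (θ ^ i) ^ p * φ (g.coeff i)
  let dl : ℕ → KaehlerDifferential ℤ K := fun i => (φ (g.coeff i))⁻¹ • absD K (φ (g.coeff i))
  have hyb : y = ∑ i ∈ s, b i := by
    rw [← hg, aeval_eq_sum_range]
    refine Finset.sum_congr rfl fun i _ => ?_
    simp only [b, φ, Algebra.smul_def]
    ring
  have hDb : ∀ (σ : K ≃ₐ[F] K) i, absD K (σ (b i)) = σ (b i) • dl i := by
    intro σ i
    have : σ (b i) = σ (θ ^ i) ^ p * φ (g.coeff i) := by simp [b, φ]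
    rw [this, D_pow_char_mul]
    by_cases h0 : g.coeff i = 0
    · simp [h0, dl, absD]
    · have : φ (g.coeff i) ≠ 0 := by simpa [φ] using h0
      simp only [dl]
      rw [mul_smul, smul_inv_smul₀ this]
  obtain ⟨k, hk⟩ := pow_mul_D_sum p s b
  set k' := (θ / y) ^ p * k
  let c : ℕ → K := fun i => θ * b i / y
  have hσy : ∀ σ : K ≃ₐ[F] K, σ y ≠ 0 := fun σ => by simpa using hy
  have hp1 : p - 1 + 1 = p := Nat.sub_add_cancel hp.out.pos
  -- First trace term: `θ·dlog y = ∑ cᵢ·dlog aᵢ` with `cᵢ = θ bᵢ / y`, and its conjugates.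
  have hA : ∀ σ : K ≃ₐ[F] K, σ θ • (σ y)⁻¹ • absD K (σ y) = ∑ i ∈ s, σ (c i) • dl i := by
    intro σ
    conv_lhs => rw [hyb, map_sum σ, D_sum, ← map_sum σ, ← hyb]
    rw [Finset.smul_sum, Finset.smul_sum]
    refine Finset.sum_congr rfl fun i _ => ?_
    rw [hDb, smul_smul, smul_smul]
    congr 1
    simp only [c, map_div₀, map_mul]
    ring
  -- Second trace term: `θ^p·dlog y = ∑ cᵢ^p·dlog aᵢ + dk'`, since `dlog y = y^(-p)·y^(p-1)·dy` and
  -- `p`-th powers are constants for `d`.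
  have hB : ∀ σ : K ≃ₐ[F] K, σ θ ^ p • (σ y)⁻¹ • absD K (σ y) =
      ∑ i ∈ s, σ (c i) ^ p • dl i + absD K (σ k') := by
    intro σ
    have h1 := hk (σ : K →+* K)
    simp only [RingHom.coe_coe] at h1
    rw [← hyb] at h1
    have h2 : σ θ ^ p • (σ y)⁻¹ • absD K (σ y) =
        (σ (θ / y)) ^ p • (σ y) ^ (p - 1) • absD K (σ y) := by
      rw [smul_smul, smul_smul]
      congr 1
      rw [map_div₀, div_pow, div_mul_eq_mul_div, mul_div_assoc]
      congr 1
      have : σ y ^ p = σ y ^ (p - 1) * σ y := by rw [← pow_succ, hp1]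
      rw [this]
      have := hσy σ
      field_simp
    rw [h2, h1, smul_add, Finset.smul_sum]
    congr 1
    · refine Finset.sum_congr rfl fun i _ => ?_
      rw [hDb, smul_smul, smul_smul, mul_assoc, ← pow_succ, hp1, ← mul_pow, ← map_mul]
      simp only [c]
      rw [div_mul_eq_mul_div]
    · rw [← D_pow_char_mul, ← map_pow, ← map_mul]
  have hαθ : ∀ σ : K ≃ₐ[F] K, σ θ ^ p - σ θ = φ α := by
    intro σ
    rw [← map_pow, ← map_sub, hθ, AlgEquiv.commutes]
  have htr : ∀ x : K, φ (Algebra.trace F K x) = ∑ σ : K ≃ₐ[F] K, σ x :=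
    fun x => trace_eq_sum_automorphisms x
  have key : α • (Algebra.norm F y)⁻¹ • absD F (Algebra.norm F y) =
      ∑ i ∈ s, (Algebra.trace F K (c i) ^ p - Algebra.trace F K (c i)) •
        (g.coeff i)⁻¹ • absD F (g.coeff i) + absD F (Algebra.trace F K k') := by
    apply kaehler_map_injective F K
    have hD : ∀ a : F, KaehlerDifferential.map ℤ ℤ F K (absD F a) = absD K (φ a) :=
      fun a => KaehlerDifferential.map_D ℤ ℤ F K a
    have hs : ∀ (a : F) (ω : KaehlerDifferential ℤ K), a • ω = φ a • ω :=
      fun a ω => (algebraMap_smul K a ω).symm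
    simp only [map_add, map_sum, map_smul, hD, hs, map_inv₀, map_sub, map_pow]
    have hN : φ (Algebra.norm F y) = ∏ σ : K ≃ₐ[F] K, σ y := Algebra.norm_eq_prod_automorphisms F y
    rw [hN, dlog_prod _ _ (fun σ _ => hσy σ), Finset.smul_sum]
    have h1 : ∀ σ : K ≃ₐ[F] K, φ α • (σ y)⁻¹ • absD K (σ y) =
        ∑ i ∈ s, (σ (c i) ^ p - σ (c i)) • dl i + absD K (σ k') := by
      intro σ
      rw [← hαθ σ, sub_smul, hA, hB]
      simp only [sub_smul, Finset.sum_sub_distrib]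
      abel
    rw [Finset.sum_congr rfl fun σ _ => h1 σ, Finset.sum_add_distrib, Finset.sum_comm, htr, D_sum]
    congr 1
    refine Finset.sum_congr rfl fun i _ => ?_
    rw [htr, sum_pow_char, ← Finset.sum_sub_distrib, Finset.sum_smul]
  rw [key]
  refine add_mem (sum_mem fun i _ => ?_) ?_
  · exact AddSubgroup.subset_closure (Or.inr ⟨_, _, rfl⟩)
  · exact AddSubgroup.subset_closure (Or.inl ⟨_, rfl⟩)

/-! ### From 1-forms to 2-forms -/

/-- The product `u ∧ v ∈ Ω^2(F)` of two 1-forms, `wedge` in degree two. -/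
def W (F : Type*) [Field F] (u v : KaehlerDifferential ℤ F) :
    ⋀[F]^2 (KaehlerDifferential ℤ F) := wedge F 2 ![u, v]

section W
variable {F : Type*} [Field F]

theorem update_zero (u v w : KaehlerDifferential ℤ F) : Function.update ![u, v] 0 w = ![w, v] := by
  ext j; fin_cases j <;> rfl

theorem update_one (u v w : KaehlerDifferential ℤ F) : Function.update ![u, v] 1 w = ![u, w] := by
  ext j; fin_cases j <;> rfl

theorem W_add_left (u u' v : KaehlerDifferential ℤ F) :
    W F (u + u') v = W F u v + W F u' v := by
  have h := (exteriorPower.ιMulti F 2).map_update_add ![u, v] 0 u u'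
  rwa [update_zero, update_zero, update_zero] at h

theorem W_smul_left (r : F) (u v : KaehlerDifferential ℤ F) :
    W F (r • u) v = r • W F u v := by
  have h := (exteriorPower.ιMulti F 2).map_update_smul ![u, v] 0 r u
  rwa [update_zero, update_zero] at h

theorem W_add_right (u v v' : KaehlerDifferential ℤ F) :
    W F u (v + v') = W F u v + W F u v' := by
  have h := (exteriorPower.ιMulti F 2).map_update_add ![u, v] 1 v v'
  rwa [update_one, update_one, update_one] at h

theorem W_smul_right (r : F) (u v : KaehlerDifferential ℤ F) :
    W F u (r • v) = r • W F u v := by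
  have h := (exteriorPower.ιMulti F 2).map_update_smul ![u, v] 1 r v
  rwa [update_one, update_one] at h

theorem W_zero_left (v : KaehlerDifferential ℤ F) : W F 0 v = 0 := by
  simpa using W_smul_left 0 0 v

theorem W_zero_right (v : KaehlerDifferential ℤ F) : W F v 0 = 0 := by
  simpa using W_smul_right 0 v 0

theorem W_neg_left (u v : KaehlerDifferential ℤ F) : W F (-u) v = - W F u v := by
  rw [eq_neg_iff_add_eq_zero, ← W_add_left, neg_add_cancel, W_zero_left]

theorem W_neg_right (u v : KaehlerDifferential ℤ F) : W F u (-v) = - W F u v := by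
  rw [eq_neg_iff_add_eq_zero, ← W_add_right, neg_add_cancel, W_zero_right]

theorem W_self (u : KaehlerDifferential ℤ F) : W F u u = 0 :=
  (exteriorPower.ιMulti F 2).map_eq_zero_of_eq ![u, u] (i := 0) (j := 1) rfl (by decide)

theorem W_swap (u v : KaehlerDifferential ℤ F) : W F u v = - W F v u := by
  have h := W_self (u + v)
  rw [W_add_left, W_add_right, W_add_right, W_self, W_self, zero_add, add_zero] at h
  exact eq_neg_of_add_eq_zero_left h

theorem logForm_eq (b x y : F) :
    logForm F 2 b ![x, y] = b • W F (x⁻¹ • absD F x) (y⁻¹ • absD F y) := by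
  have : (fun j => (![x, y] j)⁻¹ • absD F (![x, y] j)) =
      ![x⁻¹ • absD F x, y⁻¹ • absD F y] := by
    ext j; fin_cases j <;> rfl
  rw [logForm, this, W]

theorem W_D_D_mem (p : ℕ) (x y : F) : W F (absD F x) (absD F y) ∈ hRel F p 2 := by
  refine (le_sup_left : dOmega F 2 ≤ hRel F p 2) (AddSubgroup.subset_closure ⟨![x, y], ?_⟩)
  rw [W]
  congr 1
  ext j; fin_cases j <;> rfl

theorem wp_smul_mem (p : ℕ) [Fact p.Prime] (c x y : F) :
    (c ^ p - c) • W F (x⁻¹ • absD F x) (y⁻¹ • absD F y) ∈ hRel F p 2 := by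
  by_cases hx : x = 0
  · simp [hx, W_zero_left, zero_mem]
  by_cases hy : y = 0
  · simp [hy, W_zero_right, zero_mem]
  rw [← logForm_eq]
  refine (le_sup_right : _ ≤ hRel F p 2) (AddSubgroup.subset_closure ⟨c, ![x, y], ?_, rfl⟩)
  intro j; fin_cases j <;> assumption

/-- Wedging with `dlog δ` induces a map `H²(F) → H³(F)`. -/
theorem W_relOne_mem (p : ℕ) [Fact p.Prime] {ω : KaehlerDifferential ℤ F} (hω : ω ∈ relOne F p)
    (δ : F) (hδ : δ ≠ 0) : W F ω (δ⁻¹ • absD F δ) ∈ hRel F p 2 := by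
  induction hω using AddSubgroup.closure_induction with
  | mem ω h =>
    rcases h with ⟨t, rfl⟩ | ⟨c, a, rfl⟩
    · -- `dt ∧ dlog δ` is exact: `t = (t/δ)·δ`, and `dδ ∧ dδ = 0`.
      have h1 : W F (absD F t) (δ⁻¹ • absD F δ) = W F (absD F (t / δ)) (absD F δ) := by
        have h2 : absD F t = (t / δ) • absD F δ + δ • absD F (t / δ) := by
          conv_lhs => rw [← div_mul_cancel₀ t hδ, D_mul]
        rw [h2, W_smul_right, W_add_left, W_smul_left, W_smul_left, W_self, smul_zero, zero_add,
          inv_smul_smul₀ hδ]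
      rw [h1]
      exact W_D_D_mem p _ _
    · rw [W_smul_left]
      exact wp_smul_mem p c a δ
  | zero => rw [W_zero_left]; exact zero_mem _
  | add u v _ _ hu hv => rw [W_add_left]; exact add_mem hu hv
  | neg u _ hu =>
    rw [W_neg_left]
    exact neg_mem hu

/-- `Ω^2(F)` is generated as an additive group by the forms `α·dlog γ ∧ dlog δ`. -/
theorem hRel_eq_top (p : ℕ)
    (h : ∀ α γ δ : F, γ ≠ 0 → δ ≠ 0 →
      α • W F (γ⁻¹ • absD F γ) (δ⁻¹ • absD F δ) ∈ hRel F p 2) : hRel F p 2 = ⊤ := by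
  have hDD : ∀ (x y r : F), r • W F (absD F x) (absD F y) ∈ hRel F p 2 := by
    intro x y r
    by_cases hx : x = 0
    · simp [hx, D_zero, W_zero_left, zero_mem]
    by_cases hy : y = 0
    · simp [hy, D_zero, W_zero_right, zero_mem]
    have h1 := h (r * x * y) x y hx hy
    rw [W_smul_left, W_smul_right, smul_smul, smul_smul] at h1
    convert h1 using 2
    field_simp
  have hΩ : ∀ v : KaehlerDifferential ℤ F,
      v ∈ Submodule.span F (Set.range (KaehlerDifferential.D ℤ F)) := fun v => by
    rw [KaehlerDifferential.span_range_derivation]; trivial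
  have hD : ∀ (x : F) (v : KaehlerDifferential ℤ F) (r : F),
      r • W F (absD F x) v ∈ hRel F p 2 := by
    intro x v
    induction hΩ v using Submodule.span_induction with
    | mem v hv => obtain ⟨y, rfl⟩ := hv; exact hDD x y
    | zero => intro r; rw [W_zero_right, smul_zero]; exact zero_mem _
    | add u v _ _ hu hv => intro r; rw [W_add_right, smul_add]; exact add_mem (hu r) (hv r)
    | smul a v _ hv => intro r; rw [W_smul_right, smul_smul]; exact hv _
  have hW : ∀ (u v : KaehlerDifferential ℤ F) (r : F), r • W F u v ∈ hRel F p 2 := by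
    intro u v
    induction hΩ u using Submodule.span_induction with
    | mem u hu => obtain ⟨y, rfl⟩ := hu; exact hD y v
    | zero => intro r; rw [W_zero_left, smul_zero]; exact zero_mem _
    | add u v _ _ hu hv => intro r; rw [W_add_left, smul_add]; exact add_mem (hu r) (hv r)
    | smul a v _ hv => intro r; rw [W_smul_left, smul_smul]; exact hv _
  rw [eq_top_iff]
  intro ω _
  have hω : ω ∈ Submodule.span F (Set.range (exteriorPower.ιMulti F 2
      (M := KaehlerDifferential ℤ F))) := by
    rw [exteriorPower.ιMulti_span]; trivial
  -- `hRel` is not an `F`-subspace, so all scalar multiples are carried through the induction.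
  suffices ∀ r : F, r • ω ∈ hRel F p 2 by simpa using this 1
  induction hω using Submodule.span_induction with
  | mem v hv =>
    obtain ⟨y, rfl⟩ := hv
    have : y = ![y 0, y 1] := by ext j; fin_cases j <;> rfl
    rw [this]
    exact hW (y 0) (y 1)
  | zero => intro r; rw [smul_zero]; exact zero_mem _
  | add u v _ _ hu hv => intro r; rw [smul_add]; exact add_mem (hu trivial r) (hv trivial r)
  | smul a v _ hv => intro r; rw [smul_smul]; exact hv trivial _

/-- A nontrivial zero of the pure part of `A(α,α,γ,δ)` kills `α·dlog γ ∧ dlog δ` in `H³(F)` when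
`F_α = K` is a field. -/
theorem symbol_mem {K : Type*} [Field K] [Algebra F K] (p : ℕ)
    [hp : Fact p.Prime] [CharP F p] [FiniteDimensional F K]
    (α : F) (θ : K) (hθ : θ ^ p - θ = algebraMap F K α)
    (htop : Algebra.adjoin F {θ} = ⊤) (γ δ : F) (hγ : γ ≠ 0) (hδ : δ ≠ 0)
    (x : F) (y z : K) (hne : ¬(x = 0 ∧ y = 0 ∧ z = 0))
    (h : x ^ p + γ * Algebra.norm F y + δ * Algebra.norm F z = 0) :
    α • W F (γ⁻¹ • absD F γ) (δ⁻¹ • absD F δ) ∈ hRel F p 2 := by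
  have hnorm : ∀ w : K, w ≠ 0 → Algebra.norm F w ≠ 0 := fun w hw => Algebra.norm_ne_zero_iff.2 hw
  have hleft : ∀ (w : K) (a : F), w ≠ 0 → a ≠ 0 →
      α • W F ((Algebra.norm F w)⁻¹ • absD F (Algebra.norm F w)) (a⁻¹ • absD F a) ∈
        hRel F p 2 := by
    intro w a hw ha
    rw [← W_smul_left]
    exact W_relOne_mem p (smul_dlog_norm_mem p α θ hθ htop w hw) a ha
  have hright : ∀ (w : K) (a : F), w ≠ 0 → a ≠ 0 →
      α • W F (a⁻¹ • absD F a) ((Algebra.norm F w)⁻¹ • absD F (Algebra.norm F w)) ∈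
        hRel F p 2 := by
    intro w a hw ha
    rw [W_swap, smul_neg]
    exact neg_mem (hleft w a hw ha)
  have hDx : absD F (-x ^ p) = 0 := by
    have : absD F (-x ^ p) = - absD F (x ^ p) := map_neg (KaehlerDifferential.D ℤ F) _
    rw [this, D_pow_char, neg_zero]
  -- If `y = 0` then `δ·N(z) = -x^p`, hence `dlog δ = -dlog N(z)`; the case `z = 0` is symmetric.
  by_cases hy : y = 0
  · have hz : z ≠ 0 := by
      rintro rfl
      refine hne ⟨?_, hy, rfl⟩
      simpa [hy, Algebra.norm_zero, hp.out.ne_zero] using h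
    have h1 : δ * Algebra.norm F z = -x ^ p := by
      rw [hy, Algebra.norm_zero] at h; linear_combination h
    have h2 := dlog_mul hδ (hnorm z hz)
    rw [h1, hDx, smul_zero] at h2
    rw [eq_neg_of_add_eq_zero_left h2.symm, W_neg_right, smul_neg]
    exact neg_mem (hright z γ hz hγ)
  by_cases hz : z = 0
  · have h1 : γ * Algebra.norm F y = -x ^ p := by
      rw [hz, Algebra.norm_zero] at h; linear_combination h
    have h2 := dlog_mul hγ (hnorm y hy)
    rw [h1, hDx, smul_zero] at h2
    rw [eq_neg_of_add_eq_zero_left h2.symm, W_neg_left, smul_neg]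
    exact neg_mem (hleft y δ hy hδ)
  -- Otherwise `γ` and `δ` may be replaced by `u = γ·N(y)` and `v = δ·N(z)`, and `u + v = -x^p`
  -- gives `du ∧ dv = 0`.
  have hu := dlog_mul hγ (hnorm y hy)
  have hv := dlog_mul hδ (hnorm z hz)
  have hv0 : δ * Algebra.norm F z ≠ 0 := mul_ne_zero hδ (hnorm z hz)
  set u := γ * Algebra.norm F y
  set v := δ * Algebra.norm F z
  have huv : absD F u = - absD F v := by
    rw [eq_neg_iff_add_eq_zero, ← D_add, ← hDx]
    congr 1
    linear_combination h
  have hW0 : W F (u⁻¹ • absD F u) (v⁻¹ • absD F v) = 0 := by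
    rw [huv, W_smul_left, W_smul_right, W_neg_left, W_self]
    simp
  have h1 := hleft y v hy hv0
  have h2 := hright z γ hz hγ
  have h3 : α • W F (γ⁻¹ • absD F γ) (δ⁻¹ • absD F δ) =
      - (α • W F ((Algebra.norm F y)⁻¹ • absD F (Algebra.norm F y)) (v⁻¹ • absD F v)) -
      α • W F (γ⁻¹ • absD F γ) ((Algebra.norm F z)⁻¹ • absD F (Algebra.norm F z)) := by
    rw [hu, W_add_left] at hW0
    rw [eq_neg_of_add_eq_zero_right hW0, smul_neg, neg_neg, ← smul_sub]
    congr 1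
    rw [hv, W_add_right]
    abel
  rw [h3]
  exact sub_mem (neg_mem h1) h2

end W

theorem statement5 (F : Type*) [Field F] (p : ℕ) [Fact p.Prime] [CharP F p]
    (hpure : ∀ (α γ δ : F), γ ≠ 0 → δ ≠ 0 →
      ∃ (x : F)
        (y : AdjoinRoot (X ^ p - X - C α : F[X]))
        (z : AdjoinRoot (X ^ p - X - C α : F[X])),
        ¬(x = 0 ∧ y = 0 ∧ z = 0) ∧
          x ^ p + γ * Algebra.norm F y + δ * Algebra.norm F z = 0) :
    Subsingleton (Hgroup F p 2) := by
  have htop : hRel F p 2 = ⊤ := by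
    apply hRel_eq_top
    intro α γ δ hγ hδ
    by_cases hα : ∃ c : F, c ^ p - c = α
    · obtain ⟨c, rfl⟩ := hα
      exact wp_smul_mem p c γ δ
    -- Now `α ∉ ℘(F)`, so `F_α` is a field.
    push Not at hα
    have hirr := irreducible_of_forall_ne p α hα
    have : Fact (Irreducible (X ^ p - X - C α : F[X])) := ⟨hirr⟩
    have : FiniteDimensional F (AdjoinRoot (X ^ p - X - C α : F[X])) :=
      (AdjoinRoot.powerBasis hirr.ne_zero).finite
    obtain ⟨x, y, z, hne, h⟩ := hpure α γ δ hγ hδ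
    refine symbol_mem p α (AdjoinRoot.root _) ?_ AdjoinRoot.adjoinRoot_eq_top γ δ hγ hδ x y z hne h
    have h0 := AdjoinRoot.eval₂_root (X ^ p - X - C α : F[X])
    simp only [eval₂_sub, eval₂_pow, eval₂_X, eval₂_C] at h0
    exact sub_eq_zero.1 h0
  rw [Hgroup, htop]
  exact QuotientAddGroup.subsingleton_quotient_top

end
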